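/- Let p(·) : ℝ^d → (0,∞) be a measurable exponent function with 0 < p_- ≤ p_+ < ∞, and let x₀ ∈ ℝ^d be such that p(x₀) = p_-, the essential infimum of p over every ball B_r(x₀) equals p_-, and p(·) is locally log-Hölder continuous at x₀. Then there exists a constant C > 0 such that for all r > 0, ∫_{B_r(x₀)} μ(B_r(x₀))^{−p(x)/p_-} dx ≤ C. -/

import Mathlib

open MeasureTheory ENNReal Set Filter

noncomputable section

/-- One-variable `L_p` quasi-norm of an `ℝ≥0∞`-valued function (essential sup if `p = ∞`). -/
def lpNorm1 {α : Type} [MeasurableSpace α] (p : ℝ≥0∞) (μ : Measure α)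
    (g : α → ℝ≥0∞) : ℝ≥0∞ :=
  if p = ∞ then essSup g μ else (∫⁻ x, g x ^ p.toReal ∂μ) ^ (1 / p.toReal)

/-- Mixed Lebesgue quasi-norm of an `ℝ≥0∞`-valued function on a product space:
the first coordinate is integrated innermost. -/
def mixedNormE : {d : ℕ} → {α : Fin d → Type} →
    [inst : ∀ i, MeasurableSpace (α i)] → (μ : ∀ i, Measure (α i)) →
    (p : Fin d → ℝ≥0∞) → ((∀ i, α i) → ℝ≥0∞) → ℝ≥0∞
  | 0, _, _, _, _, f => f finZeroElim
  | (d + 1), α, inst, μ, p, f =>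
      @mixedNormE d (fun i => α i.succ) (fun i => inst i.succ)
        (fun i => μ i.succ) (fun i => p i.succ)
        (fun y => lpNorm1 (p 0) (μ 0) fun x => f (Fin.cons x y))

/-- Mixed Lebesgue quasi-norm `‖f‖_{p⃗}` of a real-valued function. -/
def mixedNorm {d : ℕ} {α : Fin d → Type} [∀ i, MeasurableSpace (α i)]
    (μ : ∀ i, Measure (α i)) (p : Fin d → ℝ≥0∞) (f : (∀ i, α i) → ℝ) : ℝ≥0∞ :=
  mixedNormE μ p fun x => ENNReal.ofReal |f x|

/-- Mixed Lorentz quasi-norm `‖f‖_{L_{p⃗,q}}`. -/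
def mixedLorentzNorm {d : ℕ} {α : Fin d → Type} [∀ i, MeasurableSpace (α i)]
    (μ : ∀ i, Measure (α i)) (p : Fin d → ℝ≥0∞) (q : ℝ≥0∞) (f : (∀ i, α i) → ℝ) : ℝ≥0∞ :=
  if q = ∞ then
    ⨆ (u : ℝ) (_ : 0 < u),
      ENNReal.ofReal u * mixedNorm μ p ({x | u < |f x|}.indicator fun _ => (1 : ℝ))
  else
    (∫⁻ u in Set.Ioi (0 : ℝ),
        (ENNReal.ofReal u * mixedNorm μ p ({x | u < |f x|}.indicator fun _ => (1 : ℝ))) ^ q.toReal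
          / ENNReal.ofReal u) ^ (1 / q.toReal)

/-- Non-increasing rearrangement `f^*(t)` (with `inf ∅ = ∞`). -/
def rearr {α : Type} [MeasurableSpace α] (μ : Measure α) (f : α → ℝ) (t : ℝ) : ℝ≥0∞ :=
  sInf {s : ℝ≥0∞ | μ {x | s < ENNReal.ofReal |f x|} ≤ ENNReal.ofReal t}

/-- Growth envelope function of the quasi-normed function space given by the quasi-norm `N`. -/
def growthEnv {α : Type} [MeasurableSpace α] (μ : Measure α)
    (N : (α → ℝ) → ℝ≥0∞) (t : ℝ) : ℝ≥0∞ :=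
  ⨆ (f : α → ℝ) (_ : Measurable f) (_ : N f ≤ 1), rearr μ f t

/-- The Hardy-type functional `( ∫_0^ε ( t^{pinv} f^*(t) )^v dt/t )^{1/v}`,
with the usual `sup` modification for `v = ∞`. -/
def hardy {α : Type} [MeasurableSpace α] (μ : Measure α)
    (pinv : ℝ) (v : ℝ≥0∞) (ε : ℝ) (f : α → ℝ) : ℝ≥0∞ :=
  if v = ∞ then ⨆ (t : ℝ) (_ : t ∈ Set.Ioo 0 ε), ENNReal.ofReal t ^ pinv * rearr μ f t
  else
    (∫⁻ t in Set.Ioo (0 : ℝ) ε,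
        (ENNReal.ofReal t ^ pinv * rearr μ f t) ^ v.toReal / ENNReal.ofReal t) ^ (1 / v.toReal)

/-- The modular `ϱ_{p(·)}(f) = ∫ |f(x)|^{p(x)} dμ(x)`. -/
def varModular {α : Type} [MeasurableSpace α] (μ : Measure α)
    (p : α → ℝ) (f : α → ℝ) : ℝ≥0∞ :=
  ∫⁻ x, ENNReal.ofReal (|f x| ^ p x) ∂μ

/-- The variable Lebesgue quasi-norm `‖f‖_{p(·)}`. -/
def varNorm {α : Type} [MeasurableSpace α] (μ : Measure α)
    (p : α → ℝ) (f : α → ℝ) : ℝ≥0∞ :=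
  ⨅ (l : ℝ) (_ : 0 < l) (_ : varModular μ p (fun x => f x / l) ≤ 1), ENNReal.ofReal l

/-- The variable Lorentz quasi-norm `‖f‖_{L_{p(·),q}}`. -/
def varLorentzNorm {α : Type} [MeasurableSpace α] (μ : Measure α)
    (p : α → ℝ) (q : ℝ≥0∞) (f : α → ℝ) : ℝ≥0∞ :=
  if q = ∞ then
    ⨆ (u : ℝ) (_ : 0 < u),
      ENNReal.ofReal u * varNorm μ p ({x | u < |f x|}.indicator fun _ => (1 : ℝ))
  else
    (∫⁻ u in Set.Ioi (0 : ℝ),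
        (ENNReal.ofReal u * varNorm μ p ({x | u < |f x|}.indicator fun _ => (1 : ℝ))) ^ q.toReal
          / ENNReal.ofReal u) ^ (1 / q.toReal)

/-- Local log-Hölder continuity at a point `x₀`. -/
def LocLogHolderAt {E : Type} [PseudoMetricSpace E] (p : E → ℝ) (x₀ : E) : Prop :=
  ∃ C₀ > (0 : ℝ), ∀ x, dist x x₀ < 1 / 2 → |p x - p x₀| ≤ C₀ / (-Real.log (dist x x₀))

/-- Local log-Hölder continuity (at every point, with a uniform constant). -/
def LocLogHolder {E : Type} [PseudoMetricSpace E] (p : E → ℝ) : Prop :=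
  ∃ C₀ > (0 : ℝ), ∀ x y, dist x y < 1 / 2 → |p x - p y| ≤ C₀ / (-Real.log (dist x y))

end

/-!
Write `V = μ (B_r(x₀))` and `p(x) / p(x₀) = 1 + q(x)`, so that the integrand is `V⁻¹ * V ^ (-q(x))`
with `q ≥ 0`. The factor `V⁻¹` averages over the ball, hence it suffices to bound `V ^ (-q(x))`
uniformly in `r` and `x ∈ B_r(x₀)`. On large balls `V` is bounded below and `q` is bounded above. On
small balls `V` is at least of order `r ^ s`, while log-Hölder continuity makes `q(x) * log (1 / r)`
bounded, so `r ^ (-s * q(x))` is bounded as well.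
-/

/-- Lower Ahlfors `s`-regularity of the measure `μ` at the single point `x₀`: balls about `x₀` of
radius `r` have measure at least a fixed multiple of `r ^ s`. Only radii `r ≤ 1` are tested, so that
finite measures are not excluded. -/
def LowerAhlforsRegularAt {E : Type*} [PseudoMetricSpace E] [MeasurableSpace E]
    (μ : Measure E) (s : ℝ) (x₀ : E) : Prop :=
  ∃ c > (0 : ℝ), ∀ r ∈ Ioc (0 : ℝ) 1, ENNReal.ofReal (c * r ^ s) ≤ μ (Metric.ball x₀ r)

theorem lowerAhlforsRegularAt_addHaar {E : Type*} [NormedAddCommGroup E] [NormedSpace ℝ E]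
    [FiniteDimensional ℝ E] [MeasurableSpace E] [BorelSpace E] (μ : Measure E)
    [μ.IsAddHaarMeasure] (x₀ : E) :
    LowerAhlforsRegularAt μ (Module.finrank ℝ E) x₀ := by
  refine ⟨μ.real (Metric.ball 0 1), ?_, fun r hr => ?_⟩
  · exact ENNReal.toReal_pos (Metric.measure_ball_pos μ 0 one_pos).ne' measure_ball_lt_top.ne
  · rw [Measure.addHaar_ball_of_pos μ x₀ hr.1, Real.rpow_natCast, mul_comm,
      ENNReal.ofReal_mul (pow_nonneg hr.1.le _), ofReal_measureReal measure_ball_lt_top.ne]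

theorem LocLogHolderAt.exists_abs_sub_mul_neg_log_le {E : Type} [PseudoMetricSpace E] {p : E → ℝ}
    {x₀ : E} (hp : LocLogHolderAt p x₀) (B : ℝ) :
    ∃ A, ∀ r, ∀ x ∈ Metric.ball x₀ r, |p x - p x₀| ≤ B →
      |p x - p x₀| * -Real.log (min r 1) ≤ A := by
  obtain ⟨C₀, hC₀_pos, hC₀⟩ := hp
  refine ⟨max C₀ (B * Real.log 2), fun r x hx hB => ?_⟩
  rcases lt_or_ge r (1 / 2) with hr_small | hr_large
  · refine le_max_of_le_left ?_
    rw [min_eq_left (by linarith)]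
    have hdist : dist x x₀ < r := hx
    have hbound := hC₀ x (hdist.trans hr_small)
    rcases (dist_nonneg (x := x) (y := x₀)).eq_or_lt with hzero | hdist_pos
    · -- Here the bound reads `C₀ / -log 0 = C₀ / 0 = 0`.
      have hval : |p x - p x₀| = 0 :=
        le_antisymm (by simpa [← hzero] using hbound) (abs_nonneg _)
      rw [hval, zero_mul]
      exact hC₀_pos.le
    · have hlog : -Real.log r ≤ -Real.log (dist x x₀) :=
        neg_le_neg (Real.log_le_log hdist_pos hdist.le)
      have hlog_pos : 0 < -Real.log (dist x x₀) :=
        neg_pos.2 (Real.log_neg hdist_pos (by linarith))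
      calc |p x - p x₀| * -Real.log r
          ≤ |p x - p x₀| * -Real.log (dist x x₀) := by gcongr
        _ ≤ C₀ := (le_div_iff₀ hlog_pos).1 hbound
  · refine le_max_of_le_right ?_
    have hlog : -Real.log (min r 1) ≤ Real.log 2 := by
      rw [neg_le, ← Real.log_inv]
      exact Real.log_le_log (by norm_num) (le_min (by linarith) (by norm_num))
    calc |p x - p x₀| * -Real.log (min r 1)
        ≤ |p x - p x₀| * Real.log 2 := by gcongr
      _ ≤ B * Real.log 2 := by gcongr

theorem inv_mul_rpow_rpow_le_exp {c ρ s q Q A : ℝ} (hc : 0 < c) (hρ : 0 < ρ) (hs : 0 ≤ s)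
    (hq : 0 ≤ q) (hqQ : q ≤ Q) (hA : q * -Real.log ρ ≤ A) :
    (c * ρ ^ s)⁻¹ ^ q ≤ Real.exp (|Real.log c| * Q + s * A) := by
  have hlog : Real.log (c * ρ ^ s)⁻¹ = -Real.log c + s * -Real.log ρ := by
    rw [Real.log_inv, Real.log_mul hc.ne' (by positivity), Real.log_rpow hρ]
    ring
  rw [Real.rpow_def_of_pos (by positivity), hlog, Real.exp_le_exp]
  calc (-Real.log c + s * -Real.log ρ) * q
      = -Real.log c * q + s * (q * -Real.log ρ) := by ring
    _ ≤ |Real.log c| * Q + s * A := by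
        gcongr
        exact neg_le_abs _

theorem setLIntegral_measure_rpow_neg_one_add_le {α : Type*} [MeasurableSpace α] {μ : Measure α}
    {S : Set α} {q : α → ℝ} {K : ℝ≥0∞} (hq : ∀ᵐ x ∂μ.restrict S, 0 ≤ q x)
    (hK : ∀ᵐ x ∂μ.restrict S, (μ S)⁻¹ ^ q x ≤ K) :
    ∫⁻ x in S, μ S ^ (-(1 + q x)) ∂μ ≤ K :=
  calc ∫⁻ x in S, μ S ^ (-(1 + q x)) ∂μ
      ≤ ∫⁻ _ in S, (μ S)⁻¹ * K ∂μ := by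
        refine lintegral_mono_ae ?_
        filter_upwards [hq, hK] with x hqx hKx
        rw [ENNReal.rpow_neg, ← ENNReal.inv_rpow, ENNReal.rpow_add_of_nonneg _ _ zero_le_one hqx,
          ENNReal.rpow_one]
        gcongr
    _ = (μ S)⁻¹ * μ S * K := by rw [setLIntegral_const, mul_right_comm]
    _ ≤ K := mul_le_of_le_one_left' (ENNReal.inv_mul_le_one _)

theorem LowerAhlforsRegularAt.exists_measure_ball_inv_rpow_le {E : Type*} [PseudoMetricSpace E]
    [MeasurableSpace E] {μ : Measure E} {s : ℝ} {x₀ : E} (hμ : LowerAhlforsRegularAt μ s x₀)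
    (hs : 0 ≤ s) (Q A : ℝ) :
    ∃ K > (0 : ℝ), ∀ r > (0 : ℝ), ∀ q, 0 ≤ q → q ≤ Q → q * -Real.log (min r 1) ≤ A →
      (μ (Metric.ball x₀ r))⁻¹ ^ q ≤ ENNReal.ofReal K := by
  obtain ⟨c, hc, hball⟩ := hμ
  refine ⟨Real.exp (|Real.log c| * Q + s * A), Real.exp_pos _, fun r hr q hq hqQ hqA => ?_⟩
  have hρ : 0 < min r 1 := lt_min hr one_pos
  have hv : 0 < c * min r 1 ^ s := by positivity
  calc (μ (Metric.ball x₀ r))⁻¹ ^ q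
      ≤ (μ (Metric.ball x₀ (min r 1)))⁻¹ ^ q := by
        gcongr
        exact min_le_left r 1
    _ ≤ (ENNReal.ofReal (c * min r 1 ^ s))⁻¹ ^ q := by
        gcongr
        exact hball _ ⟨hρ, min_le_right r 1⟩
    _ = ENNReal.ofReal ((c * min r 1 ^ s)⁻¹ ^ q) := by
        rw [← ENNReal.ofReal_inv_of_pos hv, ENNReal.ofReal_rpow_of_pos (inv_pos.2 hv)]
    _ ≤ ENNReal.ofReal (Real.exp (|Real.log c| * Q + s * A)) :=
        ENNReal.ofReal_le_ofReal (inv_mul_rpow_rpow_le_exp hc hρ hs hq hqQ hqA)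

theorem statement13_general {E : Type} [PseudoMetricSpace E] [MeasurableSpace E]
    [OpensMeasurableSpace E] {μ : Measure E} {s : ℝ} {x₀ : E} {p : E → ℝ}
    (hμ : LowerAhlforsRegularAt μ s x₀) (hs : 0 ≤ s) (hpos : 0 < p x₀)
    (hmin : ∀ᵐ x ∂μ, p x₀ ≤ p x) (hbdd : IsBoundedUnder (· ≤ ·) (ae μ) p)
    (hLH : LocLogHolderAt p x₀) :
    ∃ C > (0 : ℝ), ∀ r > (0 : ℝ),
      ∫⁻ x in Metric.ball x₀ r, μ (Metric.ball x₀ r) ^ (-(p x) / p x₀) ∂μ ≤ ENNReal.ofReal C := by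
  obtain ⟨M, hM⟩ := hbdd
  obtain ⟨A, hA⟩ := hLH.exists_abs_sub_mul_neg_log_le (M - p x₀)
  obtain ⟨K, hK_pos, hK⟩ :=
    hμ.exists_measure_ball_inv_rpow_le hs ((M - p x₀) / p x₀) (A / p x₀)
  refine ⟨K, hK_pos, fun r hr => ?_⟩
  have hexp : ∀ x, -(p x) / p x₀ = -(1 + (p x - p x₀) / p x₀) := fun x => by
    field_simp
    ring
  simp only [hexp]
  have hq : ∀ᵐ x ∂μ.restrict (Metric.ball x₀ r), 0 ≤ (p x - p x₀) / p x₀ := by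
    filter_upwards [ae_restrict_of_ae hmin] with x hx
    exact div_nonneg (sub_nonneg.2 hx) hpos.le
  refine setLIntegral_measure_rpow_neg_one_add_le hq ?_
  filter_upwards [ae_restrict_of_ae hmin, ae_restrict_of_ae (eventually_map.1 hM), hq,
    ae_restrict_mem measurableSet_ball] with x hmx hMx hqx hxr
  have hsub : p x - p x₀ ≤ M - p x₀ := sub_le_sub_right hMx _
  have hlog := hA r x hxr
  rw [abs_of_nonneg (sub_nonneg.2 hmx)] at hlog
  refine hK r hr _ hqx (by gcongr) ?_
  rw [div_mul_eq_mul_div]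
  gcongr
  exact hlog hsub

/-- If `0 < p_- ≤ p_+ < ∞`, `p(x₀) = p_-`, the essential infimum of `p`
over every ball `B_r(x₀)` equals `p_-`, and `p(·)` is locally log-Hölder continuous at `x₀`,
then there is `C > 0` with `∫_{B_r(x₀)} μ(B_r(x₀))^{−p(x)/p_-} dx ≤ C` for all `r > 0`. -/
theorem statement13 (d : ℕ) (p : EuclideanSpace ℝ (Fin d) → ℝ) (hpmeas : Measurable p)
    (hp0 : ∀ x, 0 < p x)
    (hpm : 0 < essInf p (volume : Measure (EuclideanSpace ℝ (Fin d))))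
    (hpp : IsBoundedUnder (· ≤ ·) (ae (volume : Measure (EuclideanSpace ℝ (Fin d)))) p)
    (x₀ : EuclideanSpace ℝ (Fin d))
    (hx₀ : p x₀ = essInf p (volume : Measure (EuclideanSpace ℝ (Fin d))))
    (hballs : ∀ r > (0 : ℝ), essInf p (volume.restrict (Metric.ball x₀ r)) =
      essInf p (volume : Measure (EuclideanSpace ℝ (Fin d))))
    (hLH : LocLogHolderAt p x₀) :
    ∃ C > (0 : ℝ), ∀ r > (0 : ℝ),
      (∫⁻ x in Metric.ball x₀ r,
          volume (Metric.ball x₀ r) ^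
            (-(p x) / essInf p (volume : Measure (EuclideanSpace ℝ (Fin d))))) ≤
        ENNReal.ofReal C := by
  rw [← hx₀]
  have hmin : ∀ᵐ x, p x₀ ≤ p x :=
    hx₀ ▸ ae_essInf_le ⟨0, eventually_map.2 (.of_forall fun x => (hp0 x).le)⟩
  exact statement13_general (lowerAhlforsRegularAt_addHaar volume x₀) (Nat.cast_nonneg _) (hp0 x₀)
    hmin hpp hLH
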